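/- Let C > 0 and define f : ℂ∖{0} → ℂ by f(z) = (1/2)(z − 1/z)·(ξ + (z + 1/z)² + 2 − (z + 1/z)). Then there exists t₀ ≥ 1 such that for all t ≥ t₀ and all ξ ∈ ℝ with −C < (ξ + 8)·t^{2/3} < 0, every real number z < 0 with f′(z) = 0 satisfies | (15t/4)^{1/3}·(z + 1) | < √(2C)·(15/4)^{1/3}; that is, the rescaled stationary points k̂_j = (15t/4)^{1/3}(ξ_j + 1), j = 3,4, lie in the fixed interval ( −√(2C)(15/4)^{1/3}, √(2C)(15/4)^{1/3} ). -/

import Mathlib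

/-!
Put `s = z + 1/z`. Since `(z - 1/z)' = s/z`, `s' = (z - 1/z)/z` and `(z - 1/z)² = s² - 4`, one gets
`2 z f'(z) = 3 s³ - 2 s² + (ξ - 6) s + 4` (`deriv_phase`). For real `z < 0` write `s = -2 - w` with
`w = (z + 1)² / (-z) ≥ 0`, and `η = -(ξ + 8)`; then the stationarity condition reads
`w (30 + 20 w + 3 w²) = η (2 + w)`, whence `15 w ≤ η`, that is, `15 (z + 1)² ≤ η (-z)`
(`stationary_bound`). As soon as `t^{2/3} ≥ C` one has `η < 1`, which forces `-z < 30`, so that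
`(z + 1)² < 2 η` and `t^{2/3} (z + 1)² < 2 C`.
-/

/-- The phase function of the defocusing Hirota equation with α = β = 1. -/
noncomputable def phase (ξ : ℝ) (z : ℂ) : ℂ :=
  (1 / 2) * (z - 1 / z) * ((ξ : ℂ) + (z + 1 / z) ^ 2 + 2 - (z + 1 / z))

lemma deriv_phase (ξ : ℝ) {z : ℂ} (hz : z ≠ 0) :
    deriv (phase ξ) z = 1 / (2 * z) *
      (3 * (z + 1 / z) ^ 3 - 2 * (z + 1 / z) ^ 2 + ((ξ : ℂ) - 6) * (z + 1 / z) + 4) := by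
  have hi : HasDerivAt (fun y : ℂ => 1 / y) (-(z ^ 2)⁻¹) z := by
    simpa only [one_div] using hasDerivAt_inv hz
  have hd := (hasDerivAt_id' z).sub hi
  have hs := (hasDerivAt_id' z).add hi
  have h := (hd.const_mul (1 / 2 : ℂ)).mul
    ((((hs.pow 2).const_add (ξ : ℂ)).add_const 2).sub hs)
  have h' : HasDerivAt (phase ξ) _ z := h
  rw [h'.deriv]
  simp only [Pi.add_apply, Pi.sub_apply, Pi.pow_apply, Nat.cast_ofNat, Nat.add_one_sub_one, pow_one]
  field_simp
  ring

lemma stationary_bound {ξ z : ℝ} (hz : z < 0) (h : deriv (phase ξ) (z : ℂ) = 0) :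
    15 * (z + 1) ^ 2 ≤ -(ξ + 8) * (-z) := by
  have hz0 : z ≠ 0 := hz.ne
  have hzc : (z : ℂ) ≠ 0 := by exact_mod_cast hz0
  rw [deriv_phase ξ hzc] at h
  have h1 := (mul_eq_zero.mp h).resolve_left (by simp [hzc])
  have h2 : 3 * (z + 1 / z) ^ 3 - 2 * (z + 1 / z) ^ 2 + (ξ - 6) * (z + 1 / z) + 4 = 0 := by
    exact_mod_cast h1
  obtain ⟨w, hw⟩ : ∃ w, w = (z + 1) ^ 2 / (-z) := ⟨_, rfl⟩
  have hw0 : 0 ≤ w := hw ▸ div_nonneg (sq_nonneg _) (by linarith)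
  have hs : z + 1 / z = -2 - w := by
    rw [hw]
    field_simp
    ring
  have hwz : (z + 1) ^ 2 = w * (-z) := by
    rw [hw]
    field_simp
  rw [hs] at h2
  have h3 : w * (30 + 20 * w + 3 * w ^ 2) = -(ξ + 8) * (2 + w) := by linarith
  have h4 : 15 * w ≤ -(ξ + 8) := by
    have : 15 * w * (2 + w) ≤ -(ξ + 8) * (2 + w) := by
      rw [← h3]
      nlinarith [pow_nonneg hw0 2, pow_nonneg hw0 3]
    exact le_of_mul_le_mul_right this (by linarith)
  rw [hwz]
  nlinarith


/-- In the transition region −C < (ξ+8)t^{2/3} < 0, for large t, every negative real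
stationary point z of the phase has rescaled position (15t/4)^{1/3}(z+1) in the fixed
interval (−√(2C)(15/4)^{1/3}, √(2C)(15/4)^{1/3}). -/
theorem rescaled_stationary_points_bounded (C : ℝ) (hC : 0 < C) :
    ∃ t₀ : ℝ, 1 ≤ t₀ ∧ ∀ t : ℝ, t₀ ≤ t → ∀ ξ : ℝ,
      -C < (ξ + 8) * t ^ ((2 : ℝ) / 3) → (ξ + 8) * t ^ ((2 : ℝ) / 3) < 0 →
      ∀ z : ℝ, z < 0 → deriv (phase ξ) (z : ℂ) = 0 →
        |(15 * t / 4) ^ ((1 : ℝ) / 3) * (z + 1)|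
          < Real.sqrt (2 * C) * (15 / 4 : ℝ) ^ ((1 : ℝ) / 3) := by
  -- The threshold makes `t ^ (2 / 3) ≥ C`, hence `-(ξ + 8) < 1`.
  refine ⟨max 1 (C ^ ((3 : ℝ) / 2)), le_max_left _ _, ?_⟩
  intro t ht ξ h1 h2 z hz hd
  have ht1 : 1 ≤ t := (le_max_left _ _).trans ht
  have ht0 : 0 ≤ t := by linarith
  have htC : C ≤ t ^ ((2 : ℝ) / 3) := by
    have := Real.rpow_le_rpow (by positivity) ((le_max_right _ _).trans ht)
      (by norm_num : (0 : ℝ) ≤ 2 / 3)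
    rw [← Real.rpow_mul hC.le] at this
    norm_num at this
    exact this
  have hsq : (t ^ ((1 : ℝ) / 3)) ^ 2 = t ^ ((2 : ℝ) / 3) := by
    rw [← Real.rpow_natCast, ← Real.rpow_mul ht0]
    norm_num
  have hb := stationary_bound hz hd
  set P := t ^ ((2 : ℝ) / 3) with hP
  have hP0 : 0 < P := by linarith
  have hη0 : 0 < -(ξ + 8) := by nlinarith
  have hη1 : -(ξ + 8) < 1 := by nlinarith
  have hz30 : -z < 30 := by nlinarith [sq_nonneg (z + 1)]
  have hlt : (z + 1) ^ 2 < 2 * -(ξ + 8) := by nlinarith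
  have key : |t ^ ((1 : ℝ) / 3) * (z + 1)| < Real.sqrt (2 * C) := by
    apply Real.lt_sqrt_of_sq_lt
    rw [sq_abs, mul_pow, hsq]
    nlinarith
  have hsplit : (15 * t / 4) ^ ((1 : ℝ) / 3)
      = (15 / 4 : ℝ) ^ ((1 : ℝ) / 3) * t ^ ((1 : ℝ) / 3) := by
    rw [← Real.mul_rpow (by norm_num) ht0]
    congr 1
    ring
  have hc : 0 < (15 / 4 : ℝ) ^ ((1 : ℝ) / 3) := by positivity
  rw [hsplit, mul_assoc, abs_mul, abs_of_pos hc, mul_comm]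
  exact mul_lt_mul_of_pos_right key hc
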